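/- Assume C is an n×n nonnegative irreducible matrix and g is an admissible weight function with n·L⁺(g) ≤ 1. Then the map u_g : Σ → Σ has a unique fixed point x*, which belongs to int(Σ), and for every x ∈ Σ the iterates u_g^s(x) converge to x* as s → ∞. -/

import Mathlib

open Set Matrix Filter Topology

/-- An admissible weight function. -/
def IsAdmissible (g g' : ℝ → ℝ) : Prop :=
  (∀ x ∈ Set.Icc (0:ℝ) 1, HasDerivWithinAt g (g' x) (Set.Icc (0:ℝ) 1) x) ∧
  ContinuousOn g' (Set.Icc (0:ℝ) 1) ∧
  g 0 = 1 ∧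
  (∀ x ∈ Set.Icc (0:ℝ) 1, 0 < g x) ∧
  (∀ x ∈ Set.Icc (0:ℝ) 1, 0 < g' x)

/-- The set of values `g'(x)/g(x)` for `x ∈ [0,1]`; its maximum is `L⁺(g)`. -/
def ratioSet (g g' : ℝ → ℝ) : Set ℝ := (fun x => g' x / g x) '' Set.Icc (0:ℝ) 1

/-- `C` is irreducible. -/
def IsIrred {n : ℕ} (C : Matrix (Fin n) (Fin n) ℝ) : Prop :=
  ∀ i j : Fin n, ∃ m : ℕ, 0 < m ∧ 0 < (C ^ m) i j

/-- The stochastic matrix `M_g(x)`. -/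
noncomputable def Mg {n : ℕ} (C : Matrix (Fin n) (Fin n) ℝ) (g : ℝ → ℝ)
    (x : Fin n → ℝ) : Matrix (Fin n) (Fin n) ℝ :=
  Matrix.of fun i j => C i j * g (x j) / ∑ k, C i k * g (x k)

/-! By the Markov chain tree theorem, the invariant measure of `M_g(x)` is proportional to the tree
weights of the matrix `C_{ij} g(x_j)` multiplied by its row sums. These are homogeneous polynomials
of degree `n` in the entries, with nonnegative coefficients. Hence, for `p = u_g(x)`, `q = u_g(y)`
and `osc v = max v - min v`,

`osc (log p - log q) ≤ n * osc (log g(x) - log g(y)) ≤ n * L⁺(g) * osc (x - y) ≤ osc (x - y)`,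

the second inequality because `log g` is increasing and `x - y` takes both signs. As the entries of
`p` and `q` are at most `1`, also `osc (p - q) < osc (log p - log q)` unless `p = q`. So `u_g`
strictly decreases `osc (x - y)`, a metric on the compact simplex, and Edelstein's theorem
for contractive maps applies. -/

section Irreducible

variable {ι R : Type*} [Ring R] [LinearOrder R] {A : Matrix ι ι R}

lemma eq_univ_of_isIrreducible_of_closed (hA : A.IsIrreducible) {S : Set ι} (hne : S.Nonempty)
    (hS : ∀ a ∈ S, ∀ b, 0 < A a b → b ∈ S) : S = univ := by
  let _ := A.toQuiver
  obtain ⟨i, hi⟩ := hne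
  refine eq_univ_of_forall fun j => ?_
  obtain ⟨p, -⟩ := hA.connected i j
  induction p with
  | nil => exact hi
  | cons _ e ih => exact hS _ ih _ e.down

lemma sum_row_pos_of_isIrreducible [Fintype ι] [IsOrderedRing R] (hA : A.IsIrreducible) (i : ι) :
    0 < ∑ j, A i j := by
  let _ := A.toQuiver
  obtain ⟨p, hp⟩ := hA.connected i i
  obtain ⟨j, e, -⟩ := p.length_ne_zero_iff_eq_comp.1 hp.ne'
  exact Finset.sum_pos' (fun k _ => hA.nonneg i k) ⟨j, Finset.mem_univ j, e.down⟩

lemma isIrreducible_mul_diagonal [Fintype ι] [DecidableEq ι] [IsStrictOrderedRing R]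
    (hA : A.IsIrreducible) {h : ι → R} (hh : ∀ j, 0 < h j) : (A * diagonal h).IsIrreducible where
  nonneg i j := by
    rw [mul_diagonal]
    exact mul_nonneg (hA.nonneg i j) (hh j).le
  connected := by
    have hquiver : (A * diagonal h).toQuiver = A.toQuiver := by
      simp only [toQuiver, mul_diagonal, mul_pos_iff_of_pos_right (hh _)]
    rw [hquiver]
    exact hA.connected

end Irreducible

section Laplacian

variable {ι R : Type*}

/-- The weighted Laplacian of the directed graph with edge weights `A`: out-degrees on the diagonal
minus `A`. -/
def laplacian [Fintype ι] [DecidableEq ι] [Ring R] (A : Matrix ι ι R) : Matrix ι ι R :=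
  diagonal (fun i => ∑ j, A i j) - A

/-- The total weight of the spanning trees of the directed graph `A` oriented towards the root `i`,
times the total weight of the edges leaving `i`. By the matrix-tree theorem the former is the
`(i, i)` cofactor of the Laplacian, which is taken as the definition. -/
def treeWeight [Fintype ι] [DecidableEq ι] [CommRing R] (A : Matrix ι ι R) (i : ι) : R :=
  (∑ j, A i j) * (laplacian A).adjugate i i

/-- The edges of the graph of `f`, as a `0`-`1` matrix, with the edge leaving `i` removed. -/
def rootedGraph [DecidableEq ι] [Zero R] [One R] (i : ι) (f : ι → ι) : Matrix ι ι R :=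
  of fun k => if k = i then 0 else Pi.single (f k) 1

/-- Every row of `A` rescaled to sum to one; a row summing to zero becomes zero. -/
def rowNormalize [Fintype ι] [DivisionRing R] (A : Matrix ι ι R) : Matrix ι ι R :=
  of fun i j => A i j / ∑ k, A i k

/-- The tree weights normalized to total mass one: by the Markov chain tree theorem, the stationary
distribution of the random walk with transition matrix `rowNormalize A`. -/
def treeDistribution [Fintype ι] [DecidableEq ι] [Field R] (A : Matrix ι ι R) (i : ι) : R :=
  treeWeight A i / ∑ k, treeWeight A k

variable [Fintype ι] [DecidableEq ι]

lemma laplacian_mulVec_apply [Ring R] (A : Matrix ι ι R) (z : ι → R) (k : ι) :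
    (laplacian A *ᵥ z) k = ∑ l, A k l * (z k - z l) := by
  rw [laplacian, sub_mulVec, Pi.sub_apply, mulVec_diagonal]
  simp only [mulVec, dotProduct, mul_sub, Finset.sum_sub_distrib, Finset.sum_mul]

lemma sum_laplacian_row [Ring R] (A : Matrix ι ι R) (k : ι) : ∑ j, laplacian A k j = 0 := by
  simp [laplacian, Finset.sum_sub_distrib, diagonal_apply]

lemma vecMul_rowNormalize_eq_self_iff [Field R] {A : Matrix ι ι R} (hA : ∀ i, ∑ j, A i j ≠ 0)
    {v : ι → R} :
    v ᵥ* rowNormalize A = v ↔ (fun i => v i / ∑ j, A i j) ᵥ* laplacian A = 0 := by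
  have hnormalize : v ᵥ* rowNormalize A = (fun i => v i / ∑ j, A i j) ᵥ* A := by
    ext j
    exact Finset.sum_congr rfl fun i _ => mul_div_left_comm (v i) (A i j) _ |>.trans (mul_comm _ _)
  have hdiagonal : (fun i => v i / ∑ j, A i j) ᵥ* diagonal (fun i => ∑ j, A i j) = v := by
    ext j
    rw [vecMul_diagonal, div_mul_cancel₀ _ (hA j)]
  rw [laplacian, vecMul_sub, hdiagonal, hnormalize, sub_eq_zero, eq_comm]

section CommRing

variable [CommRing R]

lemma det_eq_zero_of_sum_row_eq_zero [IsDomain R] [Nonempty ι] {A : Matrix ι ι R}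
    (hA : ∀ k, ∑ j, A k j = 0) : A.det = 0 := by
  refine exists_mulVec_eq_zero_iff.1 ⟨1, one_ne_zero, ?_⟩
  ext k
  simp [mulVec, dotProduct, hA k]

lemma adjugate_laplacian_apply [IsDomain R] (A : Matrix ι ι R) (i j : ι) :
    (laplacian A).adjugate i j = (laplacian A).adjugate j j := by
  have : Nonempty ι := ⟨i⟩
  have hdet : ((laplacian A).updateRow j (Pi.single i 1 - Pi.single j 1)).det = 0 := by
    refine det_eq_zero_of_sum_row_eq_zero fun k => ?_
    rcases eq_or_ne k j with rfl | hk
    · simp [Finset.sum_sub_distrib]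
    · simp only [updateRow_ne hk, sum_laplacian_row]
  rw [adjugate_apply, adjugate_apply, ← add_zero (det (updateRow _ j (Pi.single j 1))), ← hdet,
    ← det_updateRow_add, add_sub_cancel]

lemma diag_adjugate_laplacian_vecMul_laplacian [IsDomain R] (A : Matrix ι ι R) :
    (laplacian A).adjugate.diag ᵥ* laplacian A = 0 := by
  ext j
  have : Nonempty ι := ⟨j⟩
  calc ((laplacian A).adjugate.diag ᵥ* laplacian A) j
      = ((laplacian A).adjugate * laplacian A) j j :=
        Finset.sum_congr rfl fun i _ => by
          simp only [diag_apply, adjugate_laplacian_apply A j i]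
    _ = 0 := by simp [adjugate_mul, det_eq_zero_of_sum_row_eq_zero (sum_laplacian_row A)]

/-- Expanding the determinant in each row. The determinant on the right is `1` if `f` restricted to
the complement of `i` is a spanning tree rooted at `i`, and `0` otherwise. -/
lemma treeWeight_eq_sum (A : Matrix ι ι R) (i : ι) :
    treeWeight A i = ∑ f : ι → ι, (∏ k, A k (f k)) * (1 - rootedGraph i f : Matrix ι ι R).det := by
  have hrows : (laplacian A).updateRow i ((∑ j, A i j) • Pi.single i 1) =
      of fun k => ∑ l, A k l • (Pi.single k 1 - if k = i then 0 else Pi.single l 1 : ι → R) := by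
    ext k j
    rcases eq_or_ne k i with rfl | hk
    · simp [Finset.sum_mul]
    · simp [hk, hk.symm, laplacian, mul_sub, Finset.sum_sub_distrib, diagonal_apply,
        Pi.single_apply, eq_comm]
  have hgraph : ∀ f : ι → ι, (1 - rootedGraph i f : Matrix ι ι R) =
      of fun k => (Pi.single k 1 - if k = i then 0 else Pi.single (f k) 1 : ι → R) := fun f => by
    ext k j
    simp [rootedGraph, one_apply, Pi.single_apply, eq_comm]
  rw [treeWeight, adjugate_apply, ← det_updateRow_smul, hrows]
  refine (detRowAlternating.toMultilinearMap.map_sum _).trans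
    (Finset.sum_congr rfl fun f _ => ?_)
  rw [MultilinearMap.map_smul_univ, smul_eq_mul, hgraph]
  rfl

end CommRing

end Laplacian

section TreeWeight

variable {ι : Type*} [Fintype ι] [DecidableEq ι] {A B : Matrix ι ι ℝ}

lemma det_one_sub_ne_zero {F : Matrix ι ι ℝ} (hF₀ : ∀ i j, 0 ≤ F i j) (hF₁ : ∀ i, ∑ j, F i j < 1) :
    (1 - F).det ≠ 0 := by
  refine det_ne_zero_of_sum_row_lt_diag fun k => ?_
  have hoff : ∑ j ∈ Finset.univ.erase k, ‖(1 - F) k j‖ = ∑ j ∈ Finset.univ.erase k, F k j := by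
    refine Finset.sum_congr rfl fun j hj => ?_
    simp [one_apply_ne (Finset.ne_of_mem_erase hj).symm, abs_of_nonneg (hF₀ k j)]
  calc ∑ j ∈ Finset.univ.erase k, ‖(1 - F) k j‖
      = ∑ j, F k j - F k k := by
        rw [hoff, ← Finset.sum_erase_add _ _ (Finset.mem_univ k), add_sub_cancel_right]
    _ < 1 - F k k := sub_lt_sub_right (hF₁ k) _
    _ = (1 - F) k k := by simp
    _ ≤ ‖(1 - F) k k‖ := Real.le_norm_self _

/-- The determinant of `1 - t • F` equals `1` at `t = 0` and cannot vanish for `t < 1`. -/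
lemma det_one_sub_nonneg {F : Matrix ι ι ℝ} (hF₀ : ∀ i j, 0 ≤ F i j) (hF₁ : ∀ i, ∑ j, F i j ≤ 1) :
    0 ≤ (1 - F).det := by
  by_contra! hneg
  have hcont : Continuous fun t : ℝ => (1 - t • F).det := by fun_prop
  obtain ⟨t, ⟨ht₀, ht₁⟩, ht⟩ : (0 : ℝ) ∈ (fun t : ℝ => (1 - t • F).det) '' Icc 0 1 :=
    intermediate_value_Icc' zero_le_one hcont.continuousOn ⟨by simpa using hneg.le, by simp⟩
  have ht_lt : t < 1 := ht₁.lt_of_ne fun h => by simp [h, hneg.ne] at ht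
  refine det_one_sub_ne_zero (fun i j => mul_nonneg ht₀ (hF₀ i j)) (fun i => ?_) ht
  calc ∑ j, t * F i j = t * ∑ j, F i j := (Finset.mul_sum _ _ _).symm
    _ ≤ t := mul_le_of_le_one_right ht₀ (hF₁ i)
    _ < 1 := ht_lt

lemma det_one_sub_rootedGraph_nonneg (i : ι) (f : ι → ι) :
    0 ≤ (1 - rootedGraph i f : Matrix ι ι ℝ).det := by
  refine det_one_sub_nonneg (fun k l => ?_) fun k => ?_
  · simp only [rootedGraph, of_apply]
    split_ifs
    · rfl
    · exact (Pi.single_nonneg.2 zero_le_one : (0 : ι → ℝ) ≤ Pi.single (f k) 1) l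
  · simp only [rootedGraph, of_apply]
    split_ifs <;> simp

lemma treeWeight_nonneg (hA : ∀ i j, 0 ≤ A i j) (i : ι) : 0 ≤ treeWeight A i := by
  rw [treeWeight_eq_sum]
  exact Finset.sum_nonneg fun f _ =>
    mul_nonneg (Finset.prod_nonneg fun k _ => hA k (f k)) (det_one_sub_rootedGraph_nonneg i f)

lemma treeWeight_le_pow_card_mul (hA : ∀ i j, 0 ≤ A i j) {c : ℝ}
    (hAB : ∀ i j, A i j ≤ c * B i j) (i : ι) :
    treeWeight A i ≤ c ^ Fintype.card ι * treeWeight B i := by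
  rw [treeWeight_eq_sum, treeWeight_eq_sum, Finset.mul_sum]
  refine Finset.sum_le_sum fun f _ => ?_
  rw [← mul_assoc]
  refine mul_le_mul_of_nonneg_right ?_ (det_one_sub_rootedGraph_nonneg i f)
  calc ∏ k, A k (f k) ≤ ∏ k, c * B k (f k) :=
        Finset.prod_le_prod (fun k _ => hA k (f k)) fun k _ => hAB k (f k)
    _ = c ^ Fintype.card ι * ∏ k, B k (f k) := by
        rw [Finset.prod_mul_distrib, Finset.prod_const, Finset.card_univ]

/-- The maximum principle: the maximizers of `z` are closed under the edges of `A` as long as `i` is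
not among them. -/
lemma le_apply_of_laplacian_mulVec_nonpos (hA : A.IsIrreducible) {i : ι} {z : ι → ℝ}
    (hz : ∀ k ≠ i, (laplacian A *ᵥ z) k ≤ 0) (k : ι) : z k ≤ z i := by
  have : Nonempty ι := ⟨i⟩
  obtain ⟨m, hm⟩ := Finite.exists_max z
  by_contra! hk
  have hi : z i < z m := hk.trans_le (hm k)
  have hclosed : ∀ a ∈ {a | z a = z m}, ∀ b, 0 < A a b → b ∈ {a | z a = z m} := by
    rintro a (ha : z a = z m) b hab
    have hterm : ∀ l ∈ Finset.univ, 0 ≤ A a l * (z a - z l) := fun l _ =>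
      mul_nonneg (hA.nonneg a l) (sub_nonneg.2 (ha ▸ hm l))
    have hsum : A a b * (z a - z b) ≤ 0 := by
      refine (Finset.single_le_sum hterm (Finset.mem_univ b)).trans ?_
      rw [← laplacian_mulVec_apply]
      exact hz a (by rintro rfl; exact hi.ne ha)
    exact (hm b).antisymm (ha ▸ sub_nonpos.1 (nonpos_of_mul_nonpos_right hsum hab))
  have huniv : {a | z a = z m} = univ :=
    eq_univ_of_isIrreducible_of_closed hA ⟨m, by simp⟩ hclosed
  exact hi.ne (huniv.superset (mem_univ i))

lemma adjugate_laplacian_apply_self_ne_zero (hA : A.IsIrreducible) (i : ι) :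
    (laplacian A).adjugate i i ≠ 0 := by
  rw [adjugate_apply]
  by_contra hdet
  obtain ⟨z, hz_ne, hz⟩ := exists_mulVec_eq_zero_iff.2 hdet
  have hzi : z i = 0 := by simpa [mulVec] using congrFun hz i
  have hharm : ∀ k ≠ i, (laplacian A *ᵥ z) k = 0 := fun k hk => by
    simpa [mulVec, updateRow_ne hk] using congrFun hz k
  refine hz_ne (funext fun k => le_antisymm ?_ ?_)
  · exact (le_apply_of_laplacian_mulVec_nonpos hA (fun k hk => (hharm k hk).le) k).trans_eq hzi
  · have hneg := le_apply_of_laplacian_mulVec_nonpos hA (z := -z) (i := i)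
      (fun k hk => by rw [mulVec_neg, Pi.neg_apply, hharm k hk, neg_zero]) k
    simpa [hzi] using hneg

lemma treeWeight_pos (hA : A.IsIrreducible) (i : ι) : 0 < treeWeight A i :=
  (treeWeight_nonneg hA.nonneg i).lt_of_ne' <|
    mul_ne_zero (sum_row_pos_of_isIrreducible hA i).ne' (adjugate_laplacian_apply_self_ne_zero hA i)

lemma sum_treeWeight_pos [Nonempty ι] (hA : A.IsIrreducible) : 0 < ∑ i, treeWeight A i :=
  Finset.sum_pos (fun i _ => treeWeight_pos hA i) Finset.univ_nonempty

lemma treeDistribution_pos (hA : A.IsIrreducible) (i : ι) : 0 < treeDistribution A i :=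
  have : Nonempty ι := ⟨i⟩
  div_pos (treeWeight_pos hA i) (sum_treeWeight_pos hA)

lemma treeDistribution_mem_stdSimplex [Nonempty ι] (hA : A.IsIrreducible) :
    treeDistribution A ∈ stdSimplex ℝ ι := by
  refine ⟨fun i => (treeDistribution_pos hA i).le, ?_⟩
  simp only [treeDistribution]
  rw [← Finset.sum_div, div_self (sum_treeWeight_pos hA).ne']

lemma eq_zero_of_vecMul_laplacian_eq_zero (hA : A.IsIrreducible) {z : ι → ℝ}
    (hz : z ᵥ* laplacian A = 0) {j : ι} (hj : z j = 0) : z = 0 := by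
  by_contra hne
  refine adjugate_laplacian_apply_self_ne_zero hA j ?_
  rw [adjugate_apply]
  refine exists_vecMul_eq_zero_iff.1 ⟨z, hne, ?_⟩
  ext l
  rw [← hz]
  refine Finset.sum_congr rfl fun k _ => ?_
  rcases eq_or_ne k j with rfl | hk
  · rw [hj, zero_mul, zero_mul]
  · simp only [updateRow_ne hk]

lemma eq_treeDistribution_of_vecMul_rowNormalize (hA : A.IsIrreducible) {v : ι → ℝ}
    (hv : ∑ i, v i = 1) (hstat : v ᵥ* rowNormalize A = v) : v = treeDistribution A := by
  ext j
  have hrow : ∀ i, ∑ k, A i k ≠ 0 := fun i => (sum_row_pos_of_isIrreducible hA i).ne'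
  have hadj := adjugate_laplacian_apply_self_ne_zero hA
  set d := (laplacian A).adjugate.diag
  set c := v j / (∑ k, A j k) / d j
  have hker : (fun i => v i / ∑ k, A i k) - c • d = 0 := by
    refine eq_zero_of_vecMul_laplacian_eq_zero hA (j := j) ?_ ?_
    · rw [sub_vecMul, (vecMul_rowNormalize_eq_self_iff hrow).1 hstat, smul_vecMul,
        diag_adjugate_laplacian_vecMul_laplacian, smul_zero, sub_zero]
    · simp [c, div_mul_cancel₀ _ (show d j ≠ 0 from hadj j)]
  have hprop : ∀ i, v i = c * treeWeight A i := fun i => by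
    have hi : v i / ∑ k, A i k = c * d i := congrFun (sub_eq_zero.1 hker) i
    rw [(div_eq_iff (hrow i)).1 hi, treeWeight, mul_assoc, mul_comm (d i)]
    rfl
  have hmass : c * ∑ i, treeWeight A i = 1 := by
    rw [Finset.mul_sum, ← hv]
    exact Finset.sum_congr rfl fun i _ => (hprop i).symm
  rw [treeDistribution, hprop j, eq_div_iff (right_ne_zero_of_mul_eq_one hmass), mul_right_comm,
    hmass, one_mul]

lemma log_treeWeight_sub_log_treeWeight_le {C : Matrix ι ι ℝ}
    (hC : C.IsIrreducible) {h h' : ι → ℝ} (hh : ∀ j, 0 < h j) (hh' : ∀ j, 0 < h' j) {δ : ℝ}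
    (hδ : ∀ j, Real.log (h j) - Real.log (h' j) ≤ δ) (i : ι) :
    Real.log (treeWeight (C * diagonal h) i) - Real.log (treeWeight (C * diagonal h') i) ≤
      Fintype.card ι * δ := by
  have hirr := isIrreducible_mul_diagonal hC hh
  have hpos := treeWeight_pos hirr i
  have hpos' := treeWeight_pos (isIrreducible_mul_diagonal hC hh') i
  have hle : ∀ j, h j ≤ Real.exp δ * h' j := fun j => by
    rw [← Real.log_le_log_iff (hh j) (by have := hh' j; positivity),
      Real.log_mul (Real.exp_ne_zero δ) (hh' j).ne', Real.log_exp]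
    linarith [hδ j]
  have hentry : ∀ k j, (C * diagonal h) k j ≤ Real.exp δ * (C * diagonal h') k j := fun k j => by
    simp only [mul_diagonal]
    rw [mul_left_comm]
    exact mul_le_mul_of_nonneg_left (hle j) (hC.nonneg k j)
  have hlog := Real.log_le_log hpos (treeWeight_le_pow_card_mul hirr.nonneg hentry i)
  rw [Real.log_mul (by positivity) hpos'.ne', Real.log_pow, Real.log_exp] at hlog
  linarith

end TreeWeight

section Oscillation

lemma sub_lt_log_sub_log {p q : ℝ} (hq : 0 < q) (hqp : q < p) (hp : p ≤ 1) :
    p - q < Real.log p - Real.log q := by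
  have hp₀ : 0 < p := hq.trans hqp
  have hlog : Real.log (q / p) < q / p - 1 :=
    Real.log_lt_sub_one_of_pos (div_pos hq hp₀) ((div_lt_one hp₀).2 hqp).ne
  have hdiv : p - q ≤ (p - q) / p := le_div_self (sub_nonneg.2 hqp.le) hp₀ hp
  rw [Real.log_div hq.ne' hp₀.ne'] at hlog
  rw [sub_div, div_self hp₀.ne'] at hdiv
  linarith

lemma sub_le_mul_posPart_of_monotoneOn_of_lipschitzOnWith {φ : ℝ → ℝ} {s : Set ℝ} {L : NNReal}
    (hmono : MonotoneOn φ s) (hlip : LipschitzOnWith L φ s) {a b : ℝ} (ha : a ∈ s) (hb : b ∈ s) :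
    φ a - φ b ≤ L * (a - b)⁺ := by
  rcases le_total a b with hab | hba
  · have hnonneg : 0 ≤ L * (a - b)⁺ := by positivity
    linarith [hmono ha hb hab]
  · rw [posPart_of_nonneg (sub_nonneg.2 hba), ← abs_of_nonneg (sub_nonneg.2 hba), ← Real.dist_eq]
    exact (le_abs_self _).trans (hlip.dist_le_mul a ha b hb)

variable {ι : Type*} [Fintype ι]

lemma sum_sub_eq_zero {x y : ι → ℝ} (hx : x ∈ stdSimplex ℝ ι) (hy : y ∈ stdSimplex ℝ ι) :
    ∑ i, (x - y) i = 0 := by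
  simp [Finset.sum_sub_distrib, hx.2, hy.2]

variable [Nonempty ι]

/-- The oscillation `max v - min v` of a vector, that is, the largest difference of two of its
coordinates. -/
def osc (v : ι → ℝ) : ℝ :=
  (Finset.univ : Finset (ι × ι)).sup' Finset.univ_nonempty fun p => v p.1 - v p.2

lemma sub_le_osc (v : ι → ℝ) (i k : ι) : v i - v k ≤ osc v :=
  Finset.le_sup' (fun p : ι × ι => v p.1 - v p.2) (Finset.mem_univ (i, k))

lemma exists_osc_eq_sub (v : ι → ℝ) : ∃ i k, osc v = v i - v k := by
  obtain ⟨p, -, hp⟩ := Finset.exists_mem_eq_sup' Finset.univ_nonempty fun p : ι × ι => v p.1 - v p.2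
  exact ⟨p.1, p.2, hp⟩

@[simp]
lemma osc_zero : osc (0 : ι → ℝ) = 0 := by
  simp [osc]

@[fun_prop]
lemma continuous_osc : Continuous (osc : (ι → ℝ) → ℝ) :=
  Continuous.finset_sup'_apply _ fun p _ => by fun_prop

lemma posPart_add_negPart_le_osc {v : ι → ℝ} (hv : ∑ i, v i = 0) (i k : ι) :
    (v i)⁺ + (v k)⁻ ≤ osc v := by
  obtain ⟨a, -, ha⟩ : ∃ a ∈ Finset.univ, 0 ≤ v a :=
    Finset.exists_le_of_sum_le Finset.univ_nonempty (by simp [hv])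
  obtain ⟨b, -, hb⟩ : ∃ b ∈ Finset.univ, v b ≤ 0 :=
    Finset.exists_le_of_sum_le Finset.univ_nonempty (by simp [hv])
  have := sub_le_osc v i k
  have := sub_le_osc v i b
  have := sub_le_osc v a k
  have := sub_le_osc v a b
  rcases le_total 0 (v i) with hi | hi <;> rcases le_total 0 (v k) with hk | hk <;>
    simp only [posPart_of_nonneg, posPart_of_nonpos, negPart_of_nonneg, negPart_of_nonpos, hi,
      hk] <;>
    linarith

lemma abs_le_osc {v : ι → ℝ} (hv : ∑ i, v i = 0) (i : ι) : |v i| ≤ osc v :=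
  posPart_add_negPart (v i) ▸ posPart_add_negPart_le_osc hv i i

lemma osc_pos {v : ι → ℝ} (hv : ∑ i, v i = 0) (hne : v ≠ 0) : 0 < osc v := by
  obtain ⟨i, hi⟩ := Function.ne_iff.1 hne
  exact (abs_pos.2 hi).trans_le (abs_le_osc hv i)

/-- The right-hand side is Hilbert's projective distance between `p` and `q`. -/
lemma osc_sub_lt_osc_log_sub_log {p q : ι → ℝ} (hp : p ∈ stdSimplex ℝ ι) (hq : q ∈ stdSimplex ℝ ι)
    (hp₀ : ∀ i, 0 < p i) (hq₀ : ∀ i, 0 < q i) (hne : p ≠ q) :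
    osc (p - q) < osc fun i => Real.log (p i) - Real.log (q i) := by
  obtain ⟨i, k, hik⟩ := exists_osc_eq_sub (p - q)
  have hpos : ∃ a ∈ Finset.univ, 0 < (p - q) a :=
    Finset.exists_pos_of_sum_zero_of_exists_nonzero _ (sum_sub_eq_zero hp hq) (by
      simpa using Function.ne_iff.1 (sub_ne_zero.2 hne))
  have hneg : ∃ b ∈ Finset.univ, 0 < (q - p) b :=
    Finset.exists_pos_of_sum_zero_of_exists_nonzero _ (sum_sub_eq_zero hq hp) (by
      simpa using Function.ne_iff.1 (sub_ne_zero.2 hne.symm))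
  obtain ⟨a, -, ha⟩ := hpos
  obtain ⟨b, -, hb⟩ := hneg
  have hak := sub_le_osc (p - q) a k
  have hib := sub_le_osc (p - q) i b
  simp only [Pi.sub_apply] at ha hb hak hib hik
  have hi := sub_lt_log_sub_log (hq₀ i) (by linarith) (mem_Icc_of_mem_stdSimplex hp i).2
  have hk := sub_lt_log_sub_log (hp₀ k) (by linarith) (mem_Icc_of_mem_stdSimplex hq k).2
  have hlog := sub_le_osc (fun i => Real.log (p i) - Real.log (q i)) i k
  linarith

lemma osc_comp_sub_comp_le {φ : ℝ → ℝ} {s : Set ℝ} {L : NNReal} (hmono : MonotoneOn φ s)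
    (hlip : LipschitzOnWith L φ s) {x y : ι → ℝ} (hx : ∀ i, x i ∈ s) (hy : ∀ i, y i ∈ s)
    (hsum : ∑ i, (x - y) i = 0) : (osc fun i => φ (x i) - φ (y i)) ≤ L * osc (x - y) := by
  obtain ⟨i, k, hik⟩ := exists_osc_eq_sub fun i => φ (x i) - φ (y i)
  have hi := sub_le_mul_posPart_of_monotoneOn_of_lipschitzOnWith hmono hlip (hx i) (hy i)
  have hk := sub_le_mul_posPart_of_monotoneOn_of_lipschitzOnWith hmono hlip (hy k) (hx k)
  rw [← neg_sub (x k) (y k), posPart_neg] at hk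
  calc (osc fun i => φ (x i) - φ (y i))
      = (φ (x i) - φ (y i)) + (φ (y k) - φ (x k)) := by rw [hik]; ring
    _ ≤ L * (x i - y i)⁺ + L * (x k - y k)⁻ := add_le_add hi hk
    _ = L * (((x - y) i)⁺ + ((x - y) k)⁻) := by simp [mul_add]
    _ ≤ L * osc (x - y) := by gcongr; exact posPart_add_negPart_le_osc hsum i k

lemma osc_log_treeDistribution_sub_le [DecidableEq ι] {C : Matrix ι ι ℝ} (hC : C.IsIrreducible)
    {h h' : ι → ℝ} (hh : ∀ j, 0 < h j) (hh' : ∀ j, 0 < h' j) :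
    (osc fun i => Real.log (treeDistribution (C * diagonal h) i) -
        Real.log (treeDistribution (C * diagonal h') i)) ≤
      Fintype.card ι * osc fun j => Real.log (h j) - Real.log (h' j) := by
  obtain ⟨i, k, hik⟩ := exists_osc_eq_sub fun i =>
    Real.log (treeDistribution (C * diagonal h) i) - Real.log (treeDistribution (C * diagonal h') i)
  obtain ⟨a, ha⟩ := Finite.exists_max fun j => Real.log (h j) - Real.log (h' j)
  obtain ⟨b, hb⟩ := Finite.exists_max fun j => Real.log (h' j) - Real.log (h j)
  have hi := log_treeWeight_sub_log_treeWeight_le hC hh hh' ha i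
  have hk := log_treeWeight_sub_log_treeWeight_le hC hh' hh hb k
  have hlog_div : ∀ {A : Matrix ι ι ℝ}, A.IsIrreducible → ∀ j, Real.log (treeDistribution A j) =
      Real.log (treeWeight A j) - Real.log (∑ l, treeWeight A l) := fun hA j =>
    Real.log_div (treeWeight_pos hA j).ne' (sum_treeWeight_pos hA).ne'
  have hab : (Fintype.card ι : ℝ) * ((Real.log (h a) - Real.log (h' a)) -
      (Real.log (h b) - Real.log (h' b))) ≤
      Fintype.card ι * osc fun j => Real.log (h j) - Real.log (h' j) := by
    gcongr
    exact sub_le_osc (fun j => Real.log (h j) - Real.log (h' j)) a b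
  simp only [hlog_div (isIrreducible_mul_diagonal hC hh),
    hlog_div (isIrreducible_mul_diagonal hC hh')] at hik ⊢
  rw [hik]
  linarith

end Oscillation

section Dynamics

lemma tendsto_iterate_of_lyapunov_lt {X : Type*} [TopologicalSpace X] [CompactSpace X] {f : X → X}
    (hf : Continuous f) {a : X} (ha : f a = a) {V : X → ℝ} (hV : Continuous V)
    (hlt : ∀ x ≠ a, V (f x) < V x) (x : X) : Tendsto (fun s : ℕ => f^[s] x) atTop (𝓝 a) := by
  have hanti : Antitone fun s : ℕ => V (f^[s] x) := antitone_nat_of_succ_le fun s => by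
    rw [Function.iterate_succ_apply']
    rcases eq_or_ne (f^[s] x) a with h | h
    · rw [h, ha]
    · exact (hlt _ h).le
  have hbdd : BddBelow (range fun s : ℕ => V (f^[s] x)) :=
    (isCompact_range hV).bddBelow.mono (range_comp_subset_range (fun s => f^[s] x) V)
  obtain ⟨ℓ, hℓ⟩ : ∃ ℓ, Tendsto (fun s : ℕ => V (f^[s] x)) atTop (𝓝 ℓ) :=
    ⟨_, tendsto_atTop_ciInf hanti hbdd⟩
  have hℓ_succ : Tendsto (fun s : ℕ => V (f (f^[s] x))) atTop (𝓝 ℓ) := by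
    simpa only [Function.comp_def, Function.iterate_succ_apply'] using
      hℓ.comp (tendsto_add_atTop_nat 1)
  refine tendsto_nhds_of_unique_mapClusterPt fun z hz => by_contra fun hza => ?_
  have hVz : V z = ℓ := eq_of_nhds_neBot <|
    (hz.continuousAt_comp hV.continuousAt).clusterPt.mono hℓ
  have hVfz : (V ∘ f) z = ℓ := eq_of_nhds_neBot <|
    (hz.continuousAt_comp (hV.comp hf).continuousAt).clusterPt.mono hℓ_succ
  exact (hlt z hza).ne (hVfz.trans hVz.symm)

/-- Edelstein's argument: a minimizer of `x ↦ d x (f x)` is fixed by `f`. -/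
lemma exists_fixedPoint_of_contractive {X : Type*} [TopologicalSpace X] [CompactSpace X]
    [Nonempty X] {f : X → X} (hf : Continuous f) {d : X → X → ℝ} (hd : Continuous ↿d)
    (hlt : ∀ x y, x ≠ y → d (f x) (f y) < d x y) :
    ∃ a, f a = a ∧ (∀ y, f y = y → y = a) ∧
      ∀ x, Tendsto (fun s : ℕ => f^[s] x) atTop (𝓝 a) := by
  have hd_cont : Continuous fun x => d x (f x) := hd.comp (continuous_id.prodMk hf)
  obtain ⟨a, -, ha⟩ := isCompact_univ.exists_isMinOn univ_nonempty hd_cont.continuousOn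
  have hfa : f a = a := by
    by_contra hne
    exact (hlt a (f a) (Ne.symm hne)).not_ge (ha (mem_univ (f a)))
  have hlt_a : ∀ x ≠ a, d (f x) a < d x a := fun x hx => by simpa only [hfa] using hlt x a hx
  refine ⟨a, hfa, fun y hy => by_contra fun hne => ?_, fun x => ?_⟩
  · exact (hlt_a y hne).ne (by rw [hy])
  · exact tendsto_iterate_of_lyapunov_lt hf hfa (V := fun z => d z a)
      (hd.comp (continuous_id.prodMk continuous_const)) hlt_a x

variable {ι : Type*} [Fintype ι] [Nonempty ι] {u : (ι → ℝ) → ι → ℝ}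

lemma exists_fixedPoint_of_osc_sub_lt (hu : MapsTo u (stdSimplex ℝ ι) (stdSimplex ℝ ι))
    (hlt : ∀ x ∈ stdSimplex ℝ ι, ∀ y ∈ stdSimplex ℝ ι, x ≠ y → osc (u x - u y) < osc (x - y)) :
    ∃ a ∈ stdSimplex ℝ ι, u a = a ∧ (∀ y ∈ stdSimplex ℝ ι, u y = y → y = a) ∧
      ∀ x ∈ stdSimplex ℝ ι, Tendsto (fun s : ℕ => u^[s] x) atTop (𝓝 a) := by
  classical
  have : Nonempty (stdSimplex ℝ ι) := ⟨⟨_, single_mem_stdSimplex ℝ (Classical.arbitrary ι)⟩⟩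
  let f : stdSimplex ℝ ι → stdSimplex ℝ ι := hu.restrict
  have hf_lt : ∀ x y : stdSimplex ℝ ι, x ≠ y →
      osc ((f x : ι → ℝ) - (f y : ι → ℝ)) < osc ((x : ι → ℝ) - (y : ι → ℝ)) := fun x y hxy =>
    hlt x x.2 y y.2 (Subtype.coe_injective.ne hxy)
  have hf_dist : ∀ x y : stdSimplex ℝ ι,
      dist (f x) (f y) ≤ osc ((x : ι → ℝ) - (y : ι → ℝ)) := fun x y => by
    rcases eq_or_ne x y with rfl | hxy
    · simp
    · refine le_trans ?_ (hf_lt x y hxy).le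
      exact dist_pi_le_iff'.2 fun i => abs_le_osc (sum_sub_eq_zero (f x).2 (f y).2) i
  have hf : Continuous f := continuous_iff_continuousAt.2 fun y => by
    refine tendsto_iff_dist_tendsto_zero.2 (squeeze_zero (fun _ => dist_nonneg) (hf_dist · y) ?_)
    have : Continuous fun x : stdSimplex ℝ ι => osc ((x : ι → ℝ) - (y : ι → ℝ)) := by fun_prop
    simpa using this.tendsto y
  obtain ⟨a, hfa, huniq, htends⟩ := exists_fixedPoint_of_contractive hf
    (d := fun x y => osc ((x : ι → ℝ) - (y : ι → ℝ))) (continuous_osc.comp (by fun_prop)) hf_lt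
  refine ⟨a, a.2, congrArg Subtype.val hfa, fun y hy huy => ?_, fun x hx => ?_⟩
  · exact congrArg Subtype.val (huniq ⟨y, hy⟩ (Subtype.ext huy))
  · have hval := (continuous_subtype_val.tendsto a).comp (htends ⟨x, hx⟩)
    have hsemi : Function.Semiconj Subtype.val f u := fun _ => rfl
    exact hval.congr fun s => hsemi.iterate_right s ⟨x, hx⟩

end Dynamics

lemma osc_treeDistribution_sub_lt {ι : Type*} [Fintype ι] [DecidableEq ι] [Nonempty ι]
    {C : Matrix ι ι ℝ} (hC : C.IsIrreducible) {g : ℝ → ℝ} (hg_pos : ∀ t ∈ Icc (0 : ℝ) 1, 0 < g t)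
    (hg_mono : MonotoneOn g (Icc 0 1)) {L : NNReal}
    (hg_lip : LipschitzOnWith L (fun t => Real.log (g t)) (Icc 0 1))
    (hL : Fintype.card ι * (L : ℝ) ≤ 1) {x y : ι → ℝ} (hx : x ∈ stdSimplex ℝ ι)
    (hy : y ∈ stdSimplex ℝ ι) (hxy : x ≠ y) :
    osc (treeDistribution (C * diagonal (g ∘ x)) - treeDistribution (C * diagonal (g ∘ y))) <
      osc (x - y) := by
  have hIcc : ∀ {z : ι → ℝ}, z ∈ stdSimplex ℝ ι → ∀ j, z j ∈ Icc (0 : ℝ) 1 :=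
    mem_Icc_of_mem_stdSimplex
  have hgx : ∀ j, 0 < (g ∘ x) j := fun j => hg_pos _ (hIcc hx j)
  have hgy : ∀ j, 0 < (g ∘ y) j := fun j => hg_pos _ (hIcc hy j)
  have hosc : 0 < osc (x - y) := osc_pos (sum_sub_eq_zero hx hy) (sub_ne_zero.2 hxy)
  have hlog_mono : MonotoneOn (fun t => Real.log (g t)) (Icc 0 1) := fun s hs t ht hst =>
    Real.log_le_log (hg_pos s hs) (hg_mono hs ht hst)
  set p := treeDistribution (C * diagonal (g ∘ x))
  set q := treeDistribution (C * diagonal (g ∘ y))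
  rcases eq_or_ne p q with hpq | hpq
  · simpa [hpq] using hosc
  have hirr_x := isIrreducible_mul_diagonal hC hgx
  have hirr_y := isIrreducible_mul_diagonal hC hgy
  calc osc (p - q)
      < osc fun i => Real.log (p i) - Real.log (q i) :=
        osc_sub_lt_osc_log_sub_log (treeDistribution_mem_stdSimplex hirr_x)
          (treeDistribution_mem_stdSimplex hirr_y) (treeDistribution_pos hirr_x)
          (treeDistribution_pos hirr_y) hpq
    _ ≤ Fintype.card ι * osc fun j => Real.log (g (x j)) - Real.log (g (y j)) :=
        osc_log_treeDistribution_sub_le hC hgx hgy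
    _ ≤ Fintype.card ι * (L * osc (x - y)) := by
        gcongr
        exact osc_comp_sub_comp_le hlog_mono hg_lip (hIcc hx) (hIcc hy) (sum_sub_eq_zero hx hy)
    _ ≤ osc (x - y) := by
        rw [← mul_assoc]
        exact mul_le_of_le_one_left hosc.le hL

theorem uT_unique_fixed_point_and_convergence_general {ι : Type*} [Fintype ι] [DecidableEq ι]
    [Nonempty ι] {C : Matrix ι ι ℝ} (hC : C.IsIrreducible) {g : ℝ → ℝ}
    (hg_pos : ∀ t ∈ Icc (0 : ℝ) 1, 0 < g t) (hg_mono : MonotoneOn g (Icc 0 1)) {L : NNReal}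
    (hg_lip : LipschitzOnWith L (fun t => Real.log (g t)) (Icc 0 1))
    (hL : Fintype.card ι * (L : ℝ) ≤ 1) {u : (ι → ℝ) → ι → ℝ}
    (hu : ∀ x ∈ stdSimplex ℝ ι, u x ∈ stdSimplex ℝ ι ∧
      u x ᵥ* rowNormalize (C * diagonal (g ∘ x)) = u x) :
    ∃ xs ∈ stdSimplex ℝ ι, (∀ i, 0 < xs i) ∧ u xs = xs ∧
      (∀ y ∈ stdSimplex ℝ ι, u y = y → y = xs) ∧
      ∀ x ∈ stdSimplex ℝ ι, Tendsto (fun s : ℕ => u^[s] x) atTop (𝓝 xs) := by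
  have hirr : ∀ x ∈ stdSimplex ℝ ι, (C * diagonal (g ∘ x)).IsIrreducible := fun x hx =>
    isIrreducible_mul_diagonal hC fun j => hg_pos _ (mem_Icc_of_mem_stdSimplex hx j)
  have hu_eq : ∀ x ∈ stdSimplex ℝ ι, u x = treeDistribution (C * diagonal (g ∘ x)) := fun x hx =>
    eq_treeDistribution_of_vecMul_rowNormalize (hirr x hx) (hu x hx).1.2 (hu x hx).2
  obtain ⟨xs, hxs, hfix, huniq, htends⟩ :=
    exists_fixedPoint_of_osc_sub_lt (fun x hx => (hu x hx).1) fun x hx y hy hxy => by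
      rw [hu_eq x hx, hu_eq y hy]
      exact osc_treeDistribution_sub_lt hC hg_pos hg_mono hg_lip hL hx hy hxy
  refine ⟨xs, hxs, fun i => ?_, hfix, huniq, htends⟩
  rw [← hfix, hu_eq xs hxs]
  exact treeDistribution_pos (hirr xs hxs) i

lemma Mg_eq_rowNormalize {n : ℕ} (C : Matrix (Fin n) (Fin n) ℝ) (g : ℝ → ℝ) (x : Fin n → ℝ) :
    Mg C g x = rowNormalize (C * diagonal (g ∘ x)) := by
  simp only [Mg, rowNormalize, mul_diagonal, Function.comp_apply]

namespace IsAdmissible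

variable {g g' : ℝ → ℝ}

lemma pos (hg : IsAdmissible g g') : ∀ t ∈ Icc (0 : ℝ) 1, 0 < g t :=
  hg.2.2.2.1

lemma deriv_pos (hg : IsAdmissible g g') : ∀ t ∈ Icc (0 : ℝ) 1, 0 < g' t :=
  hg.2.2.2.2

lemma monotoneOn (hg : IsAdmissible g g') : MonotoneOn g (Icc 0 1) :=
  monotoneOn_of_hasDerivWithinAt_nonneg (convex_Icc 0 1)
    (fun t ht => (hg.1 t ht).continuousWithinAt)
    (fun t ht => (hg.1 t (interior_subset ht)).mono interior_subset)
    fun t ht => (hg.deriv_pos t (interior_subset ht)).le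

lemma lipschitzOnWith_log (hg : IsAdmissible g g') {L : ℝ} (hL : L ∈ upperBounds (ratioSet g g')) :
    LipschitzOnWith L.toNNReal (fun t => Real.log (g t)) (Icc 0 1) := by
  refine (convex_Icc 0 1).lipschitzOnWith_of_nnnorm_hasDerivWithin_le
    (fun t ht => (hg.1 t ht).log (hg.pos t ht).ne') fun t ht => ?_
  have hratio : 0 < g' t / g t := div_pos (hg.deriv_pos t ht) (hg.pos t ht)
  rw [← NNReal.coe_le_coe, coe_nnnorm, Real.norm_of_nonneg hratio.le]
  exact (hL ⟨t, ht, rfl⟩).trans (Real.le_coe_toNNReal L)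

lemma ratioSet_nonneg (hg : IsAdmissible g g') {r : ℝ} (hr : r ∈ ratioSet g g') : 0 ≤ r := by
  obtain ⟨t, ht, rfl⟩ := hr
  exact (div_pos (hg.deriv_pos t ht) (hg.pos t ht)).le

end IsAdmissible

theorem uT_unique_fixed_point_and_convergence
    (n : ℕ) (hn : 0 < n) (C : Matrix (Fin n) (Fin n) ℝ)
    (hC0 : ∀ i j, 0 ≤ C i j) (hCirr : IsIrred C)
    (g g' : ℝ → ℝ) (hg : IsAdmissible g g')
    (Lp : ℝ) (hLp : IsGreatest (ratioSet g g') Lp)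
    (hsmall : (n : ℝ) * Lp ≤ 1)
    (u : (Fin n → ℝ) → (Fin n → ℝ))
    (hu : ∀ x ∈ stdSimplex ℝ (Fin n), u x ∈ stdSimplex ℝ (Fin n) ∧
      Matrix.vecMul (u x) (Mg C g x) = u x ∧
      ∀ v ∈ stdSimplex ℝ (Fin n), Matrix.vecMul v (Mg C g x) = v → v = u x) :
    ∃ xs ∈ stdSimplex ℝ (Fin n), (∀ i, 0 < xs i) ∧ u xs = xs ∧
      (∀ y ∈ stdSimplex ℝ (Fin n), u y = y → y = xs) ∧
      ∀ x ∈ stdSimplex ℝ (Fin n),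
        Tendsto (fun s : ℕ => u^[s] x) atTop (𝓝 xs) := by
  have : NeZero n := ⟨hn.ne'⟩
  lift Lp to NNReal using hg.ratioSet_nonneg hLp.1
  refine uT_unique_fixed_point_and_convergence_general
    ((isIrreducible_iff_exists_pow_pos hC0).2 hCirr) hg.pos hg.monotoneOn
    (hg.lipschitzOnWith_log hLp.2) (by simpa using hsmall) fun x hx => ?_
  rw [← Mg_eq_rowNormalize]
  exact ⟨(hu x hx).1, (hu x hx).2.1⟩
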